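/- Let (C_1, …, C_n) be a torsion n-tuple in an abelian category C. Then each class C_i is stable under extensions: for every short exact sequence 0 → A → B → C → 0 in C with A ∈ C_i and C ∈ C_i, also B ∈ C_i. -/

import Mathlib

open CategoryTheory CategoryTheory.Limits

universe u v

variable {C : Type u} [Category.{v} C] [Abelian C]

/-- A class of objects is closed under isomorphism. -/
def IsoClosed (S : Set C) : Prop :=
  ∀ ⦃X Y : C⦄, (X ≅ Y) → X ∈ S → Y ∈ S

/-- A torsion pair `(𝒯, ℱ)` in an abelian category: both classes are closed under
isomorphism, there are no nonzero morphisms from `𝒯` to `ℱ`, and every object `X` fits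
into a short exact sequence `0 → T → X → F → 0` with `T ∈ 𝒯`, `F ∈ ℱ`. -/
structure IsTorsionPair (𝒯 ℱ : Set C) : Prop where
  isoClosed_torsion : IsoClosed 𝒯
  isoClosed_free : IsoClosed ℱ
  hom_zero : ∀ ⦃X Y : C⦄, X ∈ 𝒯 → Y ∈ ℱ → ∀ f : X ⟶ Y, f = 0
  exists_ses : ∀ X : C, ∃ (T F : C) (i : T ⟶ X) (p : X ⟶ F) (w : i ≫ p = 0),
    T ∈ 𝒯 ∧ F ∈ ℱ ∧ (ShortComplex.mk i p w).ShortExact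


/-- There are no nonzero morphisms from objects of `𝒮` to objects of `𝒯`. -/
def HomOrth (𝒮 𝒯 : Set C) : Prop :=
  ∀ ⦃X Y : C⦄, X ∈ 𝒮 → Y ∈ 𝒯 → ∀ f : X ⟶ Y, f = 0

/-- `FiltClass [C₁, …, Cₖ]` is the class of objects `X` admitting a filtration
`0 = X₀ ≤ X₁ ≤ … ≤ Xₖ = X` with `Xⱼ/Xⱼ₋₁ ∈ Cⱼ`, expressed recursively: `X` sits in a
short exact sequence `0 → A → X → B → 0` with `A ∈ C₁` and `B` filtered by the rest. -/
def FiltClass : List (Set C) → Set C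
  | [] => {X : C | IsZero X}
  | 𝒮 :: rest => {X : C | ∃ (A B : C) (i : A ⟶ X) (p : X ⟶ B) (w : i ≫ p = 0),
      A ∈ 𝒮 ∧ B ∈ FiltClass rest ∧ (ShortComplex.mk i p w).ShortExact}

/-- A torsion `n`-tuple `(C₁, …, Cₙ)` in an abelian category, given as a list of classes
of objects: each class is closed under isomorphism, `Hom(Cᵢ, Cⱼ) = 0` for `i < j`, and
every object of `C` admits a filtration with subsequent quotients in `C₁, …, Cₙ`. -/
structure IsTorsionTuple (L : List (Set C)) : Prop where
  isoClosed : ∀ S ∈ L, IsoClosed S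
  homOrth : L.Pairwise HomOrth
  filt_univ : FiltClass L = Set.univ

/-!
Write the tuple as `(𝒫₁, …, 𝒫ₖ, 𝒮, ℛ₁, …, ℛₘ)`. The class `𝒮` consists exactly of the objects `X`
with `Hom(𝒫ᵢ, X) = 0` and `Hom(X, ℛⱼ) = 0` for all `i`, `j`. Indeed, in a filtration of such an `X`
the pieces from the `𝒫ᵢ` vanish one after another, each being a subobject of `X` included by a zero
map, and the quotient by the piece from `𝒮` vanishes because `X` has no nonzero map to an object
built from the `ℛⱼ`; so `X` is isomorphic to its piece from `𝒮`. Conditions of the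
form `Hom(𝒫, -) = 0` or `Hom(-, ℛ) = 0` are stable under extensions.
-/

section Orthogonal

variable {D : Type*} [Category* D] [Preadditive D] [Balanced D] (P : ObjectProperty D)

instance isClosedUnderExtensions_leftOrthogonal : P.leftOrthogonal.IsClosedUnderExtensions where
  prop_X₂_of_shortExact {E} hE h₁ h₃ Y f hY := by
    have := hE.epi_g
    obtain ⟨g, rfl⟩ := hE.exact.desc' f (h₁ _ hY)
    rw [h₃ g hY, comp_zero]

instance isClosedUnderExtensions_rightOrthogonal : P.rightOrthogonal.IsClosedUnderExtensions where
  prop_X₂_of_shortExact {E} hE h₁ h₃ X f hX := by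
    have := hE.mono_f
    obtain ⟨g, rfl⟩ := hE.exact.lift' f (h₃ _ hX)
    rw [h₁ g hX, zero_comp]

end Orthogonal

section Filtration

variable {P R L : List (Set C)} {S T : Set C} {X : C}

theorem isoClosed_filtClass (L : List (Set C)) : IsoClosed (FiltClass L) := by
  intro X Y e hX
  cases L with
  | nil => exact IsZero.of_iso hX e.symm
  | cons S L =>
    obtain ⟨A, B, i, p, w, hA, hB, hE⟩ := hX
    exact ⟨A, B, i ≫ e.hom, e.inv ≫ p, by simp [w], hA, hB,
      ShortComplex.shortExact_of_iso
        (ShortComplex.isoMk (Iso.refl A) e (Iso.refl B) (by simp) (by simp)) hE⟩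

theorem prop_of_mem_filtClass (Q : ObjectProperty C) [Q.IsClosedUnderIsomorphisms]
    [Q.ContainsZero] [Q.IsClosedUnderExtensions] (hL : ∀ T ∈ L, ∀ Y ∈ T, Q Y)
    (hX : X ∈ FiltClass L) : Q X := by
  induction L generalizing X with
  | nil => exact Q.prop_of_isZero hX
  | cons T L ih =>
    obtain ⟨hT, hL⟩ := List.forall_mem_cons.1 hL
    obtain ⟨A, B, i, p, w, hA, hB, hE⟩ := hX
    exact Q.prop_X₂_of_shortExact hE (hT A hA) (ih hL hB)

theorem mem_filtClass_of_cons (hT : ObjectProperty.rightOrthogonal (· ∈ T) X)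
    (hX : X ∈ FiltClass (T :: L)) : X ∈ FiltClass L := by
  obtain ⟨A, B, i, p, w, hA, hB, hE⟩ := hX
  have : Mono i := hE.mono_f
  have hA₀ : IsZero A := IsZero.of_mono_eq_zero i (hT i hA)
  have : IsIso p := hE.isIso_g_iff.2 hA₀
  exact isoClosed_filtClass L (asIso p).symm hB

theorem mem_filtClass_of_append (hP : ∀ T ∈ P, ObjectProperty.rightOrthogonal (· ∈ T) X)
    (hX : X ∈ FiltClass (P ++ L)) : X ∈ FiltClass L := by
  induction P with
  | nil => exact hX
  | cons T P ih =>
    obtain ⟨hT, hP⟩ := List.forall_mem_cons.1 hP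
    exact ih hP (mem_filtClass_of_cons hT hX)

theorem mem_of_mem_filtClass_cons (hS : IsoClosed S)
    (hR : ∀ T ∈ R, ObjectProperty.leftOrthogonal (· ∈ T) X)
    (hX : X ∈ FiltClass (S :: R)) : X ∈ S := by
  obtain ⟨A, B, i, p, w, hA, hB, hE⟩ := hX
  have hXB : ObjectProperty.rightOrthogonal (· = X) B :=
    prop_of_mem_filtClass _ (by rintro T hT Y hY _ f rfl; exact hR T hT f hY) hB
  have : Epi p := hE.epi_g
  have hB₀ : IsZero B := IsZero.of_epi_eq_zero p (hXB p rfl)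
  have : IsIso i := hE.isIso_f_iff.2 hB₀
  exact hS (asIso i) hA

theorem stmt5_general (hS : IsoClosed S) (hP : ∀ T ∈ P, HomOrth T S) (hR : ∀ T ∈ R, HomOrth S T)
    {E : ShortComplex C} (hE : E.ShortExact) (hX : E.X₂ ∈ FiltClass (P ++ S :: R))
    (h₁ : E.X₁ ∈ S) (h₃ : E.X₃ ∈ S) : E.X₂ ∈ S := by
  have hPE : ∀ T ∈ P, ObjectProperty.rightOrthogonal (· ∈ T) E.X₂ := fun T hT =>
    ObjectProperty.prop_X₂_of_shortExact _ hE
      (fun _ f hY => hP T hT hY h₁ f) (fun _ f hY => hP T hT hY h₃ f)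
  have hRE : ∀ T ∈ R, ObjectProperty.leftOrthogonal (· ∈ T) E.X₂ := fun T hT =>
    ObjectProperty.prop_X₂_of_shortExact _ hE
      (fun _ f hY => hR T hT h₁ hY f) (fun _ f hY => hR T hT h₃ hY f)
  exact mem_of_mem_filtClass_cons hS hRE (mem_filtClass_of_append hPE hX)

end Filtration

theorem exists_eq_append_cons_of_pairwise {α : Type*} {r : α → α → Prop} {l : List α} {a : α}
    (hl : l.Pairwise r) (ha : a ∈ l) :
    ∃ l₁ l₂, l = l₁ ++ a :: l₂ ∧ (∀ b ∈ l₁, r b a) ∧ ∀ b ∈ l₂, r a b := by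
  obtain ⟨l₁, l₂, rfl⟩ := List.append_of_mem ha
  obtain ⟨-, hl₂, hl₁⟩ := List.pairwise_append.1 hl
  exact ⟨l₁, l₂, rfl, fun b hb => hl₁ b hb a List.mem_cons_self, (List.pairwise_cons.1 hl₂).1⟩

/-- Each class of a torsion `n`-tuple is stable under extensions. -/
theorem stmt5 {L : List (Set C)} (h : IsTorsionTuple L) {S : Set C} (hS : S ∈ L)
    (E : ShortComplex C) (hE : E.ShortExact) (h1 : E.X₁ ∈ S) (h3 : E.X₃ ∈ S) :
    E.X₂ ∈ S := by
  obtain ⟨P, R, rfl, hP, hR⟩ := exists_eq_append_cons_of_pairwise h.homOrth hS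
  exact stmt5_general (h.isoClosed S hS) hP hR hE (h.filt_univ ▸ Set.mem_univ _) h1 h3
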